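/- arXiv:2206.12631 — 2 statements merged into one kernel-verified Lean document; each statement's English description precedes it below -/
import Mathlib

section
/- Let 𝒫 be a type system on Ω whose associated equivalence relation ∼ is neither the trivial relation (equality) nor the universal relation (all addresses equivalent). Then Stab_V(𝒫) is a proper subgroup of Thompson's group V. -/
/-!
Two observations make the subgroup part short. First, `g` is a prefix substitution map iff it acts
by prefix substitution on all sufficiently long addresses (`isPrefixSubst_iff`). Second, since `r`
is coherent and reduced, `r α β` holds iff `r (α ++ w) (β ++ w)` for all words `w` of any given
length (`rel_iff_append`). Hence "for cofinitely many addresses" may be dropped from the definition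
of `Stabilizes`: a prefix substitution map stabilizes `r` iff it preserves `r` on all addresses
where it is defined (`stabilizes_iff`). That condition is visibly closed under inverses and,
after passing to long extensions, under products.

For properness, suppose that every element of `V` stabilizes `r`. If `α ∼ β` and `α`, `β`, `γ` are
pairwise incomparable, the element swapping the cones of `β` and `γ` fixes `α` and sends `β` to `γ`,
so `α ∼ γ`. As `r` is not equality, coherence gives incomparable `α ∼ β`; then `α0 ∼ β0`,
and therefore `α0 ∼ β0 ∼ α1` are three pairwise incomparable equivalent addresses. Any long address
`δ` extends at most one of the three, so the other two show that `δ` lies in their class. Thus all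
long addresses are equivalent, and `r` is universal because it is reduced: a contradiction.
-/

/-- Addresses: finite words over the alphabet `{0,1}` (`Bool`). -/
abbrev Addr : Type := List Bool

/-- Cantor space: infinite words over the alphabet `{0,1}`. -/
abbrev Cantor : Type := ℕ → Bool

/-- Prepend the finite word `α` to the infinite word `w`. -/
def wcat (α : Addr) (w : Cantor) : Cantor := fun n =>
  if h : n < α.length then α.get ⟨n, h⟩ else w (n - α.length)

/-- The cone of the address `α`: the set of infinite words having `α` as a prefix. -/
def cone (α : Addr) : Set Cantor := Set.range (wcat α)

/-- `g` is a prefix substitution map: there are partitions of Cantor space into cones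
`(A i)𝔠` and `(B i)𝔠` such that `g` maps `(A i) w` to `(B i) w`. -/
def IsPrefixSubst (g : Equiv.Perm Cantor) : Prop :=
  ∃ (n : ℕ) (A B : Fin n → Addr),
    (∀ i j, i ≠ j → Disjoint (cone (A i)) (cone (A j))) ∧
    (⋃ i, cone (A i)) = Set.univ ∧
    (∀ i j, i ≠ j → Disjoint (cone (B i)) (cone (B j))) ∧
    (⋃ i, cone (B i)) = Set.univ ∧
    (∀ i w, g (wcat (A i) w) = wcat (B i) w)

/-- Thompson's group `V`, as the set of prefix substitution maps inside `Equiv.Perm Cantor`. -/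
def VSet : Set (Equiv.Perm Cantor) := { g | IsPrefixSubst g }

/-- `α ^ g = β` : `g` maps the cone of `α` onto the cone of `β` by the prefix
substitution `α ↦ β`. -/
def actsOn (g : Equiv.Perm Cantor) (α β : Addr) : Prop :=
  ∀ w, g (wcat α w) = wcat β w

/-- A subset of `Equiv.Perm Cantor` that is closed under the group operations. -/
def IsSubgroupSet (M : Set (Equiv.Perm Cantor)) : Prop :=
  (1 : Equiv.Perm Cantor) ∈ M ∧ (∀ g ∈ M, ∀ h ∈ M, g * h ∈ M) ∧ ∀ g ∈ M, g⁻¹ ∈ M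

/-- `M` is a maximal subgroup of Thompson's group `V`. -/
def IsMaximalSubgroupOfV (M : Set (Equiv.Perm Cantor)) : Prop :=
  IsSubgroupSet M ∧ M ⊆ VSet ∧ M ≠ VSet ∧
    ∀ H : Set (Equiv.Perm Cantor),
      IsSubgroupSet H → M ⊆ H → H ⊆ VSet → H = M ∨ H = VSet

/-- A relation on addresses is coherent if `α ∼ β` implies `α0 ∼ β0` and `α1 ∼ β1`. -/
def Coherent (r : Addr → Addr → Prop) : Prop :=
  ∀ α β, r α β → r (α ++ [false]) (β ++ [false]) ∧ r (α ++ [true]) (β ++ [true])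

/-- A relation on addresses is reduced if `α0 ∼ β0` and `α1 ∼ β1` imply `α ∼ β`. -/
def Reduced (r : Addr → Addr → Prop) : Prop :=
  ∀ α β, r (α ++ [false]) (β ++ [false]) → r (α ++ [true]) (β ++ [true]) → r α β

/-- A type system: a coherent and reduced equivalence relation on addresses
(identified with the partition of `Ω` into its classes). -/
def IsTypeSystem (r : Addr → Addr → Prop) : Prop :=
  Equivalence r ∧ Coherent r ∧ Reduced r

/-- `g` fixes the parts of `r`: for all but finitely many addresses `α`, the image
`α ^ g` is defined and equivalent to `α`. -/
def FixesParts (r : Addr → Addr → Prop) (g : Equiv.Perm Cantor) : Prop :=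
  { α : Addr | ¬ ∃ β, actsOn g α β ∧ r α β }.Finite

/-- `g` stabilizes `r`: on some cofinite set of addresses, `α ^ g` is defined and `g`
preserves equivalence and inequivalence of addresses. -/
def Stabilizes (r : Addr → Addr → Prop) (g : Equiv.Perm Cantor) : Prop :=
  ∃ Ω₀ : Set Addr, Ω₀ᶜ.Finite ∧ (∀ α ∈ Ω₀, ∃ β, actsOn g α β) ∧
    ∀ α ∈ Ω₀, ∀ α' ∈ Ω₀, ∀ β β', actsOn g α β → actsOn g α' β' → (r α α' ↔ r β β')

/-- `Fix_V(𝒫)`: the elements of Thompson's group `V` fixing the parts of `r`. -/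
def FixSet (r : Addr → Addr → Prop) : Set (Equiv.Perm Cantor) :=
  { g | IsPrefixSubst g ∧ FixesParts r g }

/-- `Stab_V(𝒫)`: the elements of Thompson's group `V` stabilizing `r`. -/
def StabSet (r : Addr → Addr → Prop) : Set (Equiv.Perm Cantor) :=
  { g | IsPrefixSubst g ∧ Stabilizes r g }

/-- The type system of `s` is a quotient of that of `r`. -/
def IsQuotientOf (s r : Addr → Addr → Prop) : Prop :=
  IsTypeSystem s ∧ ∀ α β, r α β → s α β

/-- A simple type system: the universal relation is a proper quotient, and every
quotient is either the type system itself or the universal one. -/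
def SimpleTS (r : Addr → Addr → Prop) : Prop :=
  IsTypeSystem r ∧ (∃ α β : Addr, ¬ r α β) ∧
    ∀ s : Addr → Addr → Prop, IsQuotientOf s r →
      (∀ α β, s α β ↔ r α β) ∨ ∀ α β, s α β

/-- The type (equivalence class) of the address `α`. -/
def typeOf (r : Addr → Addr → Prop) (α : Addr) : Set Addr := { β | r α β }

/-! ### Words and cones -/

/-- The infinite word `x` with its first `k` letters removed. -/
def dropWord (k : ℕ) (x : Cantor) : Cantor := fun n => x (n + k)

/-- The prefix of length `k` of the infinite word `x`. -/
def takeWord (k : ℕ) (x : Cantor) : Addr := List.ofFn (fun i : Fin k => x i)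

/-- Neither address is a prefix of the other. -/
def Incomp (α β : Addr) : Prop := ¬ α <+: β ∧ ¬ β <+: α

theorem Incomp.symm {α β : Addr} (h : Incomp α β) : Incomp β α := ⟨h.2, h.1⟩

theorem wcat_append (α β : Addr) (w : Cantor) : wcat (α ++ β) w = wcat α (wcat β w) := by
  funext n
  simp only [wcat, List.length_append, List.get_eq_getElem]
  by_cases h1 : n < α.length
  · have : n < α.length + β.length := by omega
    simp [h1, this, List.getElem_append_left]
  · by_cases h2 : n < α.length + β.length
    · have h3 : n - α.length < β.length := by omega
      simp only [h1, h2, h3, dif_pos, dif_neg, not_false_eq_true]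
      rw [List.getElem_append_right (by omega)]
    · have h3 : ¬ n - α.length < β.length := by omega
      simp only [h1, h2, h3, dif_neg, not_false_eq_true]
      congr 1
      omega

theorem dropWord_wcat (α : Addr) (w : Cantor) : dropWord α.length (wcat α w) = w := by
  funext n
  simp [dropWord, wcat]

theorem wcat_injective (α : Addr) : Function.Injective (wcat α) :=
  Function.LeftInverse.injective (dropWord_wcat α)

theorem length_takeWord (k : ℕ) (x : Cantor) : (takeWord k x).length = k := by simp [takeWord]

theorem wcat_takeWord (k : ℕ) (x : Cantor) : wcat (takeWord k x) (dropWord k x) = x := by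
  funext n
  by_cases h : n < k
  · simp [wcat, takeWord, h]
  · have h2 : n - k + k = n := by omega
    simp [wcat, takeWord, dropWord, h, h2]

theorem prefix_of_wcat_eq {α β : Addr} {w v : Cantor} (h : wcat α w = wcat β v)
    (hl : α.length ≤ β.length) : α <+: β := by
  rw [List.prefix_iff_eq_take]
  apply List.ext_getElem
  · simp [hl]
  · intro n h1 h2
    have h3 := congrFun h n
    have h4 : n < β.length := by omega
    simpa [wcat, h1, h4] using h3

theorem Incomp.wcat_ne {α β : Addr} (h : Incomp α β) (w v : Cantor) : wcat α w ≠ wcat β v := by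
  intro he
  rcases le_total α.length β.length with hl | hl
  · exact h.1 (prefix_of_wcat_eq he hl)
  · exact h.2 (prefix_of_wcat_eq he.symm hl)

theorem Incomp.append_right {α β : Addr} (h : Incomp α β) (u v : Addr) :
    Incomp (α ++ u) (β ++ v) := by
  constructor
  · intro h1
    rcases List.prefix_or_prefix_of_prefix ((List.prefix_append α u).trans h1)
      (List.prefix_append β v) with h2 | h2
    · exact h.1 h2
    · exact h.2 h2
  · intro h1
    rcases List.prefix_or_prefix_of_prefix ((List.prefix_append β v).trans h1)
      (List.prefix_append α u) with h2 | h2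
    · exact h.2 h2
    · exact h.1 h2

theorem Incomp.not_both {α β δ : Addr} (h : Incomp α β) (h1 : α <+: δ) : ¬ β <+: δ := by
  intro h2
  rcases List.prefix_or_prefix_of_prefix h1 h2 with h3 | h3
  · exact h.1 h3
  · exact h.2 h3

theorem incomp_of_not_prefix {α δ : Addr} (h : ¬ α <+: δ) (hl : α.length ≤ δ.length) :
    Incomp α δ := by
  refine ⟨h, fun h1 => h ?_⟩
  have := h1.eq_of_length (le_antisymm h1.length_le hl)
  rw [this]

theorem incomp_append_bool (α u v : Addr) (a : Bool) : Incomp (α ++ a :: u) (α ++ (!a) :: v) := by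
  constructor <;> · rw [List.prefix_append_right_inj]; cases a <;> simp

/-! ### The action on addresses -/

theorem actsOn.append {g : Equiv.Perm Cantor} {α β : Addr} (h : actsOn g α β) (u : Addr) :
    actsOn g (α ++ u) (β ++ u) := by
  intro w
  rw [wcat_append, wcat_append, h]

theorem actsOn_inv {g : Equiv.Perm Cantor} {α β : Addr} : actsOn g⁻¹ α β ↔ actsOn g β α := by
  constructor
  · intro h w
    simp [← h w]
  · intro h w
    simp [← h w]

/-- For the direction from right to left, the partition of the domain consists of the cones of all
addresses of length `N`, and that of the range consists of their images. -/
theorem isPrefixSubst_iff (g : Equiv.Perm Cantor) :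
    IsPrefixSubst g ↔ ∃ N : ℕ, ∀ α : Addr, N ≤ α.length → ∃ β, actsOn g α β := by
  constructor
  · rintro ⟨n, A, B, -, hA, -, -, hg⟩
    refine ⟨∑ i, (A i).length, fun α hα => ?_⟩
    have hx : wcat α (fun _ => false) ∈ ⋃ i, cone (A i) := by rw [hA]; trivial
    obtain ⟨i, v, hv⟩ := Set.mem_iUnion.1 hx
    have hi : (A i).length ≤ α.length :=
      (Finset.single_le_sum (f := fun i => (A i).length) (fun _ _ => Nat.zero_le _)
        (Finset.mem_univ i)).trans hα
    obtain ⟨u, rfl⟩ := prefix_of_wcat_eq hv hi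
    exact ⟨B i ++ u, actsOn.append (hg i) u⟩
  · rintro ⟨N, hN⟩
    have hfin : Finite {α : Addr // α.length = N} := List.finite_length_eq Bool N
    obtain ⟨n, ⟨e⟩⟩ := Finite.exists_equiv_fin {α : Addr // α.length = N}
    choose B hB using fun i : Fin n => hN (e.symm i).1 (e.symm i).2.ge
    have hdisj : ∀ i j, i ≠ j → ∀ w v, wcat (e.symm i).1 w ≠ wcat (e.symm j).1 v := by
      intro i j hij w v h
      have hl : (e.symm i).1.length = (e.symm j).1.length := by
        rw [(e.symm i).2, (e.symm j).2]
      have h1 := (prefix_of_wcat_eq h hl.le).eq_of_length hl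
      exact hij (e.symm.injective (Subtype.ext h1))
    have hcov : ∀ x : Cantor, ∃ i w, wcat (e.symm i).1 w = x := fun x =>
      ⟨e ⟨takeWord N x, length_takeWord N x⟩, dropWord N x, by simp [wcat_takeWord]⟩
    refine ⟨n, fun i => (e.symm i).1, B, ?_, ?_, ?_, ?_, hB⟩
    · intro i j hij
      rw [Set.disjoint_left]
      rintro _ ⟨w, rfl⟩ ⟨v, hv⟩
      exact hdisj i j hij w v hv.symm
    · refine Set.eq_univ_of_forall fun x => Set.mem_iUnion.2 ?_
      obtain ⟨i, w, h⟩ := hcov x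
      exact ⟨i, w, h⟩
    · intro i j hij
      rw [Set.disjoint_left]
      rintro _ ⟨w, rfl⟩ ⟨v, hv⟩
      rw [← hB i, ← hB j] at hv
      exact hdisj i j hij w v (g.injective hv).symm
    · refine Set.eq_univ_of_forall fun x => Set.mem_iUnion.2 ?_
      obtain ⟨i, w, h⟩ := hcov (g.symm x)
      exact ⟨i, w, by rw [← hB i, h, Equiv.apply_symm_apply]⟩

theorem IsPrefixSubst.one : IsPrefixSubst 1 :=
  (isPrefixSubst_iff 1).2 ⟨0, fun α _ => ⟨α, fun _ => rfl⟩⟩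

theorem IsPrefixSubst.inv {g : Equiv.Perm Cantor} (h : IsPrefixSubst g) : IsPrefixSubst g⁻¹ := by
  obtain ⟨n, A, B, h1, h2, h3, h4, h5⟩ := h
  exact ⟨n, B, A, h3, h4, h1, h2, fun i => actsOn_inv.2 (h5 i)⟩

theorem IsPrefixSubst.mul {g h : Equiv.Perm Cantor} (hg : IsPrefixSubst g)
    (hh : IsPrefixSubst h) : IsPrefixSubst (g * h) := by
  rw [isPrefixSubst_iff] at *
  obtain ⟨M, hM⟩ := hg
  obtain ⟨N, hN⟩ := hh
  refine ⟨N + M, fun α hα => ?_⟩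
  obtain ⟨β, hβ⟩ := hN (α.take N) (by simp; omega)
  obtain ⟨γ, hγ⟩ := hM (β ++ α.drop N) (by simp; omega)
  refine ⟨γ, fun w => ?_⟩
  have h1 := hβ.append (α.drop N)
  rw [List.take_append_drop] at h1
  rw [Equiv.Perm.mul_apply, h1, hγ]

/-! ### Stabilizers of type systems -/

theorem rel_append {r : Addr → Addr → Prop} (hc : Coherent r) {α β : Addr} (h : r α β)
    (w : Addr) : r (α ++ w) (β ++ w) := by
  induction w generalizing α β with
  | nil => simpa using h
  | cons a w ih =>
    have h1 : r (α ++ [a]) (β ++ [a]) := by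
      cases a
      · exact (hc _ _ h).1
      · exact (hc _ _ h).2
    simpa using ih h1

theorem rel_iff_append {r : Addr → Addr → Prop} (hts : IsTypeSystem r) (N : ℕ) (α β : Addr) :
    r α β ↔ ∀ w : Addr, w.length = N → r (α ++ w) (β ++ w) := by
  refine ⟨fun h w _ => rel_append hts.2.1 h w, fun h => ?_⟩
  induction N generalizing α β with
  | zero => simpa using h [] rfl
  | succ N ih =>
    have key : ∀ a : Bool, r (α ++ [a]) (β ++ [a]) := fun a =>
      ih _ _ fun w hw => by simpa using h (a :: w) (by simp [hw])
    exact hts.2.2 _ _ (key false) (key true)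

/-- On a prefix substitution map, the cofinite set in the definition of `Stabilizes` can be
replaced by the set of all addresses on which the map is defined. -/
theorem stabilizes_iff {r : Addr → Addr → Prop} (hts : IsTypeSystem r) {g : Equiv.Perm Cantor}
    (hg : IsPrefixSubst g) :
    Stabilizes r g ↔ ∀ α α' β β', actsOn g α β → actsOn g α' β' → (r α α' ↔ r β β') := by
  constructor
  · rintro ⟨S, hS, -, hr⟩ α α' β β' h h'
    obtain ⟨N, hN⟩ := (hS.image List.length).bddAbove
    have hmem : ∀ γ : Addr, N < γ.length → γ ∈ S := by
      intro γ hγ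
      by_contra hn
      exact absurd (hN (Set.mem_image_of_mem List.length hn)) (by omega)
    rw [rel_iff_append hts (N + 1) α, rel_iff_append hts (N + 1) β]
    refine forall₂_congr fun w hw => ?_
    exact hr _ (hmem _ (by simp; omega)) _ (hmem _ (by simp; omega)) _ _
      (h.append w) (h'.append w)
  · intro h
    obtain ⟨N, hN⟩ := (isPrefixSubst_iff g).1 hg
    refine ⟨{α | N ≤ α.length}, ?_, hN, fun α _ α' _ β β' => h α α' β β'⟩
    refine (List.finite_length_lt Bool N).subset fun α hα => ?_
    simpa using hα

theorem stabSet_isSubgroupSet {r : Addr → Addr → Prop} (hts : IsTypeSystem r) :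
    IsSubgroupSet (StabSet r) := by
  refine ⟨⟨.one, (stabilizes_iff hts .one).2 ?_⟩, ?_, ?_⟩
  · intro α α₂ β β₂ h1 h2
    -- If `α` and `β` had the same cone but `β` continued `α` by a letter `a`, then `α` followed by
    -- letters other than `a` would lie in only one of the two cones.
    have key : ∀ {α β : Addr}, actsOn 1 α β → α = β := by
      intro α β h
      have h0 : ∀ w, wcat α w = wcat β w := h
      by_contra hne
      rcases le_total α.length β.length with hl | hl
      · obtain ⟨u, rfl⟩ := prefix_of_wcat_eq (h0 fun _ => false) hl
        cases u with
        | nil => simp at hne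
        | cons a u =>
          have h1 := h0 (fun _ => !a)
          rw [wcat_append] at h1
          have h2 := congrFun (wcat_injective _ h1) 0
          cases a <;> simp [wcat] at h2
      · obtain ⟨u, rfl⟩ := prefix_of_wcat_eq (h0 fun _ => false).symm hl
        cases u with
        | nil => simp at hne
        | cons a u =>
          have h1 := h0 (fun _ => !a)
          rw [wcat_append] at h1
          have h2 := congrFun (wcat_injective _ h1) 0
          cases a <;> simp [wcat] at h2
    rw [key h1, key h2]
  · rintro g ⟨hg, hgs⟩ h ⟨hh, hhs⟩
    rw [stabilizes_iff hts hg] at hgs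
    rw [stabilizes_iff hts hh] at hhs
    refine ⟨hg.mul hh, (stabilizes_iff hts (hg.mul hh)).2 fun α α₂ β β₂ hα hα₂ => ?_⟩
    -- `h` need not be defined on `α` and `α₂`, but it is on their extensions by `N` letters.
    obtain ⟨N, hN⟩ := (isPrefixSubst_iff h).1 hh
    rw [rel_iff_append hts N α, rel_iff_append hts N β]
    refine forall₂_congr fun w hw => ?_
    obtain ⟨γ, hγ⟩ := hN (α ++ w) (by simp [hw])
    obtain ⟨γ', hγ'⟩ := hN (α₂ ++ w) (by simp [hw])
    rw [hhs _ _ _ _ hγ hγ']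
    refine hgs _ _ _ _ (fun v => ?_) (fun v => ?_)
    · rw [← hγ v]; exact hα.append w v
    · rw [← hγ' v]; exact hα₂.append w v
  · rintro g ⟨hg, hgs⟩
    rw [stabilizes_iff hts hg] at hgs
    refine ⟨hg.inv, (stabilizes_iff hts hg.inv).2 fun α α₂ β β₂ hα hα₂ => ?_⟩
    exact (hgs _ _ _ _ (actsOn_inv.1 hα) (actsOn_inv.1 hα₂)).symm

/-! ### Swapping two cones -/

open Classical in
/-- The map exchanging the cones of `β` and `γ` by prefix substitution and fixing all other
points. It is an involution when `β` and `γ` are incomparable. -/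
noncomputable def swapFun (β γ : Addr) (x : Cantor) : Cantor :=
  if x ∈ cone β then wcat γ (dropWord β.length x)
  else if x ∈ cone γ then wcat β (dropWord γ.length x) else x

theorem swapFun_left (β γ : Addr) (w : Cantor) : swapFun β γ (wcat β w) = wcat γ w := by
  have h : wcat β w ∈ cone β := ⟨w, rfl⟩
  simp [swapFun, h, dropWord_wcat]

theorem swapFun_right {β γ : Addr} (hi : Incomp β γ) (w : Cantor) :
    swapFun β γ (wcat γ w) = wcat β w := by
  have h : wcat γ w ∈ cone γ := ⟨w, rfl⟩
  have h' : wcat γ w ∉ cone β := fun ⟨v, hv⟩ => hi.wcat_ne v w hv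
  simp [swapFun, h, h', dropWord_wcat]

theorem swapFun_other {α β γ : Addr} (h1 : Incomp α β) (h2 : Incomp α γ) (w : Cantor) :
    swapFun β γ (wcat α w) = wcat α w := by
  have h : wcat α w ∉ cone β := fun ⟨v, hv⟩ => h1.wcat_ne w v hv.symm
  have h' : wcat α w ∉ cone γ := fun ⟨v, hv⟩ => h2.wcat_ne w v hv.symm
  simp [swapFun, h, h']

theorem swapFun_involutive {β γ : Addr} (hi : Incomp β γ) :
    Function.Involutive (swapFun β γ) := by
  intro x
  by_cases h1 : x ∈ cone β
  · obtain ⟨w, rfl⟩ := h1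
    rw [swapFun_left, swapFun_right hi]
  · by_cases h2 : x ∈ cone γ
    · obtain ⟨w, rfl⟩ := h2
      rw [swapFun_right hi, swapFun_left]
    · have h3 : swapFun β γ x = x := by simp [swapFun, h1, h2]
      rw [h3, h3]

/-- The swap of the cones of two incomparable addresses, as a permutation of Cantor space. -/
noncomputable def swapPerm {β γ : Addr} (hi : Incomp β γ) : Equiv.Perm Cantor :=
  (swapFun_involutive hi).toPerm

theorem swapPerm_isPrefixSubst {β γ : Addr} (hi : Incomp β γ) : IsPrefixSubst (swapPerm hi) := by
  rw [isPrefixSubst_iff]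
  refine ⟨β.length + γ.length, fun α hα => ?_⟩
  by_cases h1 : β <+: α
  · obtain ⟨u, rfl⟩ := h1
    exact ⟨γ ++ u, actsOn.append (fun w => swapFun_left β γ w) u⟩
  · by_cases h2 : γ <+: α
    · obtain ⟨u, rfl⟩ := h2
      exact ⟨β ++ u, actsOn.append (fun w => swapFun_right hi w) u⟩
    · exact ⟨α, fun w => swapFun_other (incomp_of_not_prefix h1 (by omega)).symm
        (incomp_of_not_prefix h2 (by omega)).symm w⟩

/-- If every element of `V` stabilizes `r`, then the swap of the cones of `β` and `γ`
carries `α ∼ β` to `α ∼ γ`. -/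
theorem rel_of_incomp {r : Addr → Addr → Prop} (hts : IsTypeSystem r)
    (hall : VSet ⊆ StabSet r) {α β γ : Addr} (hab : Incomp α β) (hag : Incomp α γ)
    (hbg : Incomp β γ) (h : r α β) : r α γ := by
  have hs := swapPerm_isPrefixSubst hbg
  have := (stabilizes_iff hts hs).1 (hall hs).2 α β α γ
    (fun w => swapFun_other hab hag w) (fun w => swapFun_left β γ w)
  exact this.1 h

theorem exists_incomp_of_prefix {r : Addr → Addr → Prop} (hts : IsTypeSystem r) {α β : Addr}
    (h : r α β) (hne : α ≠ β) (hp : α <+: β) : ∃ α β, r α β ∧ Incomp α β := by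
  obtain ⟨u, rfl⟩ := hp
  cases u with
  | nil => simp at hne
  | cons a u =>
    -- Appending a letter other than the first letter of `u` makes the two addresses diverge.
    refine ⟨_, _, rel_append hts.2.1 h [!a], ?_⟩
    have := (incomp_append_bool α (u ++ [!a]) [] a).symm
    simpa using this

theorem exists_incomp {r : Addr → Addr → Prop} (hts : IsTypeSystem r)
    (h : ∃ α β : Addr, r α β ∧ α ≠ β) : ∃ α β, r α β ∧ Incomp α β := by
  obtain ⟨α, β, hr, hne⟩ := h
  by_cases h1 : α <+: β
  · exact exists_incomp_of_prefix hts hr hne h1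
  by_cases h2 : β <+: α
  · exact exists_incomp_of_prefix hts (hts.1.symm hr) hne.symm h2
  exact ⟨α, β, hr, h1, h2⟩

theorem rel_univ_of_VSet_subset {r : Addr → Addr → Prop} (hts : IsTypeSystem r)
    (hnontrivial : ∃ α β : Addr, r α β ∧ α ≠ β) (hall : VSet ⊆ StabSet r) (δ ε : Addr) :
    r δ ε := by
  obtain ⟨α, β, hr, hi⟩ := exists_incomp hts hnontrivial
  have hab : Incomp (α ++ [false]) (β ++ [false]) := hi.append_right _ _
  have hac : Incomp (α ++ [false]) (α ++ [true]) := incomp_append_bool α [] [] false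
  have hbc : Incomp (β ++ [false]) (α ++ [true]) := hi.symm.append_right _ _
  have rab : r (α ++ [false]) (β ++ [false]) := rel_append hts.2.1 hr _
  have rac : r (α ++ [false]) (α ++ [true]) := rel_of_incomp hts hall hab hac hbc rab
  have rbc := hts.1.trans (hts.1.symm rab) rac
  have la : (α ++ [false]).length = α.length + 1 := by simp
  have lb : (β ++ [false]).length = β.length + 1 := by simp
  have lc : (α ++ [true]).length = α.length + 1 := by simp
  generalize α ++ [false] = a at *
  generalize β ++ [false] = b at *
  generalize α ++ [true] = c at *
  have key : ∀ δ : Addr, α.length + β.length + 1 ≤ δ.length → r a δ := by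
    intro δ hδ
    have ia := fun h : ¬ a <+: δ => incomp_of_not_prefix h (by omega)
    have ib := fun h : ¬ b <+: δ => incomp_of_not_prefix h (by omega)
    have ic := fun h : ¬ c <+: δ => incomp_of_not_prefix h (by omega)
    by_cases h1 : a <+: δ
    · have hb := ib (hab.not_both h1)
      have hc := ic (hac.not_both h1)
      exact hts.1.trans rab (rel_of_incomp hts hall hbc hb hc rbc)
    · by_cases h2 : b <+: δ
      · exact rel_of_incomp hts hall hac (ia h1) (ic (hbc.not_both h2)) rac
      · exact rel_of_incomp hts hall hab (ia h1) (ib h2) rab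
  rw [rel_iff_append hts (α.length + β.length + 1)]
  intro w hw
  exact hts.1.trans (hts.1.symm (key _ (by simp; omega))) (key _ (by simp; omega))

/-- If the equivalence relation of a type system is neither the
trivial relation nor the universal relation, then `Stab_V(𝒫)` is a proper subgroup of
Thompson's group `V`. -/
theorem stabSet_proper (r : Addr → Addr → Prop) (hts : IsTypeSystem r)
    (hnontrivial : ∃ α β : Addr, r α β ∧ α ≠ β)
    (hnonuniversal : ∃ α β : Addr, ¬ r α β) :
    IsSubgroupSet (StabSet r) ∧ StabSet r ⊂ VSet := by
  refine ⟨stabSet_isSubgroupSet hts, fun g hg => hg.1, fun hall => ?_⟩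
  obtain ⟨α, β, h⟩ := hnonuniversal
  exact h (rel_univ_of_VSet_subset hts hnontrivial hall α β)
end

section
/- Let 𝒫 be a simple type system on Ω which contains a cycle. Then 𝒫 contains exactly one, two or three stable child-closed subsets. Moreover, if 𝒫 contains exactly two stable child-closed subsets then one of them has cardinality 1 and is a subset of the other; and if 𝒫 contains three stable child-closed subsets then two of them have cardinality 1 and the third is the union of the first two. -/
/-- `S` is a union of `r`-classes, i.e. a set of types of the type system. -/
def Saturated (r : Addr → Addr → Prop) (S : Set Addr) : Prop :=
  ∀ α ∈ S, ∀ β, r α β → β ∈ S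

/-- `S` is child-closed: with each address (type) it contains both of its children. -/
def ChildClosed (S : Set Addr) : Prop :=
  ∀ α ∈ S, α ++ [false] ∈ S ∧ α ++ [true] ∈ S

/-- The word `γ` determines a path through `S` from (the type of) `α`. -/
def PathThrough (S : Set Addr) (α γ : Addr) : Prop :=
  ∀ ζ : Addr, ζ <+: γ → α ++ ζ ∈ S

/-- `S` is strongly connected. -/
def StronglyConnected (r : Addr → Addr → Prop) (S : Set Addr) : Prop :=
  ∀ α ∈ S, ∀ β ∈ S, ∃ γ : Addr, γ ≠ [] ∧ PathThrough S α γ ∧ r (α ++ γ) β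

/-- A nucleus: a (nonempty) child-closed and strongly connected set of types. -/
def IsNucleus (r : Addr → Addr → Prop) (S : Set Addr) : Prop :=
  S.Nonempty ∧ Saturated r S ∧ ChildClosed S ∧ StronglyConnected r S

/-- `S` consists of exactly one type. -/
def IsSingleType (r : Addr → Addr → Prop) (S : Set Addr) : Prop :=
  ∃ α : Addr, S = typeOf r α

/-- A multinuclear type system: finitely many pairwise disjoint nuclei containing the
types of all sufficiently long addresses. -/
def Multinuclear (r : Addr → Addr → Prop) : Prop :=
  ∃ (k : ℕ) (Q : Fin k → Set Addr), 0 < k ∧ (∀ i, IsNucleus r (Q i)) ∧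
    (∀ i j, i ≠ j → Disjoint (Q i) (Q j)) ∧
    ∃ t : ℕ, 0 < t ∧ ∀ α : Addr, t ≤ α.length → ∃ i, α ∈ Q i

/-- A nuclear type system: a single nucleus containing the types of all sufficiently
long addresses. -/
def Nuclear (r : Addr → Addr → Prop) : Prop :=
  ∃ Q : Set Addr, IsNucleus r Q ∧ ∃ t : ℕ, 0 < t ∧ ∀ α : Addr, t ≤ α.length → α ∈ Q

/-- An atomic binuclear type system: two disjoint singleton nuclei containing the types
of all sufficiently long addresses. -/
def AtomicBinuclear (r : Addr → Addr → Prop) : Prop :=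
  ∃ Q₁ Q₂ : Set Addr, IsNucleus r Q₁ ∧ IsNucleus r Q₂ ∧ Disjoint Q₁ Q₂ ∧
    IsSingleType r Q₁ ∧ IsSingleType r Q₂ ∧
    ∃ t : ℕ, 0 < t ∧ ∀ α : Addr, t ≤ α.length → α ∈ Q₁ ∪ Q₂

/-- The data `(𝒬, ℛ)` witnessing that a type system is quasinuclear. -/
def QuasinuclearData (r : Addr → Addr → Prop) (Q R : Set Addr) : Prop :=
  Q.Nonempty ∧ R.Nonempty ∧ Saturated r Q ∧ Saturated r R ∧ Disjoint Q R ∧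
    (∃ t : ℕ, 0 < t ∧ ∀ α : Addr, t ≤ α.length → α ∈ Q ∪ R) ∧
    IsNucleus r R ∧ StronglyConnected r Q ∧ ChildClosed (Q ∪ R) ∧
    ∀ α ∈ Q, ∀ β ∈ R, ∃ γ : Addr, r (α ++ γ) β

/-- A quasinuclear type system. -/
def Quasinuclear (r : Addr → Addr → Prop) : Prop :=
  ∃ Q R : Set Addr, QuasinuclearData r Q R

/-- `𝒬†`: the types of `𝒬` both of whose children lie in `𝒬`. -/
def QDagger (Q : Set Addr) : Set Addr :=
  { α ∈ Q | α ++ [false] ∈ Q ∧ α ++ [true] ∈ Q }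

/-- An atomic quasinuclear type system: the nucleus `ℛ` is a single type. -/
def AtomicQuasinuclear (r : Addr → Addr → Prop) : Prop :=
  ∃ Q R : Set Addr, QuasinuclearData r Q R ∧ IsSingleType r R

/-- There is a cycle in `S` based at (the type of) `α`. -/
def HasCycleAt (r : Addr → Addr → Prop) (S : Set Addr) (α : Addr) : Prop :=
  ∃ γ : Addr, γ ≠ [] ∧ PathThrough S α γ ∧ r (α ++ γ) α

/-- `S` is stable: every type of `S` is reachable by a path through `S` from a type of
`S` carrying a cycle in `S`. -/
def Stable (r : Addr → Addr → Prop) (S : Set Addr) : Prop :=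
  ∀ β ∈ S, ∃ α ∈ S, HasCycleAt r S α ∧
    ∃ γ : Addr, PathThrough S α γ ∧ r (α ++ γ) β

/-- The collection of nonempty stable child-closed subsets of the type system. -/
def StableChildClosedSets (r : Addr → Addr → Prop) : Set (Set Addr) :=
  { S | S.Nonempty ∧ Saturated r S ∧ ChildClosed S ∧ Stable r S }

/-- The relation identifying two addresses when all their sufficiently long extensions are
`r`-equivalent or both lie in `S`. For saturated child-closed `S` this is the finest quotient of `r` in which
`S` collapses to a single type. -/
def mergeRel (r : Addr → Addr → Prop) (S : Set Addr) (α β : Addr) : Prop :=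
  ∃ n : ℕ, ∀ γ : Addr, n ≤ γ.length → r (α ++ γ) (β ++ γ) ∨ (α ++ γ ∈ S ∧ β ++ γ ∈ S)

/-- The set of addresses whose type is a descendant of a type carrying a cycle; it is the largest
stable child-closed set. -/
def cyclicCore (r : Addr → Addr → Prop) : Set Addr :=
  { β | ∃ α δ γ : Addr, γ ≠ [] ∧ r (α ++ γ) α ∧ r (α ++ δ) β }

lemma Coherent.append {r : Addr → Addr → Prop} (h : Coherent r) (γ : Addr) :
    ∀ α β, r α β → r (α ++ γ) (β ++ γ) := by
  induction γ with
  | nil => intro α β hab; simpa using hab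
  | cons x γ ih =>
    intro α β hab
    have key : r (α ++ [x]) (β ++ [x]) := by
      cases x
      · exact (h α β hab).1
      · exact (h α β hab).2
    simpa using ih _ _ key

lemma ChildClosed.append {S : Set Addr} (h : ChildClosed S) (γ : Addr) :
    ∀ α ∈ S, α ++ γ ∈ S := by
  induction γ with
  | nil => intro α ha; simpa using ha
  | cons x γ ih =>
    intro α ha
    have key : α ++ [x] ∈ S := by
      cases x
      · exact (h α ha).1
      · exact (h α ha).2
    simpa using ih _ key

lemma ChildClosed.pathThrough {S : Set Addr} (h : ChildClosed S) {α : Addr} (ha : α ∈ S)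
    (γ : Addr) : PathThrough S α γ :=
  fun ζ _ => h.append ζ α ha

lemma mergeRel_isQuotientOf {r : Addr → Addr → Prop} (hr : IsTypeSystem r) {S : Set Addr}
    (hsat : Saturated r S) : IsQuotientOf (mergeRel r S) r := by
  obtain ⟨heq, hcoh, -⟩ := hr
  refine ⟨⟨⟨?_, ?_, ?_⟩, ?_, ?_⟩, ?_⟩
  · exact fun α => ⟨0, fun γ _ => Or.inl (heq.refl _)⟩
  · rintro α β ⟨n, hn⟩
    exact ⟨n, fun γ hγ => (hn γ hγ).imp heq.symm And.symm⟩
  · rintro α β δ ⟨n, hn⟩ ⟨m, hm⟩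
    refine ⟨max n m, fun γ hγ => ?_⟩
    rcases hn γ (le_trans (le_max_left _ _) hγ) with h1 | h1 <;>
      rcases hm γ (le_trans (le_max_right _ _) hγ) with h2 | h2
    · exact Or.inl (heq.trans h1 h2)
    · exact Or.inr ⟨hsat _ h2.1 _ (heq.symm h1), h2.2⟩
    · exact Or.inr ⟨h1.1, hsat _ h1.2 _ h2⟩
    · exact Or.inr ⟨h1.1, h2.2⟩
  · rintro α β ⟨n, hn⟩
    constructor <;> refine ⟨n, fun γ hγ => ?_⟩
    · simpa using hn (false :: γ) (by simp; omega)
    · simpa using hn (true :: γ) (by simp; omega)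
  · rintro α β ⟨n, hn⟩ ⟨m, hm⟩
    refine ⟨max n m + 1, fun γ hγ => ?_⟩
    match γ, hγ with
    | false :: γ, hγ =>
      simpa using hn γ (by simp at hγ; omega)
    | true :: γ, hγ =>
      simpa using hm γ (by simp at hγ; omega)
  · exact fun α β h => ⟨0, fun γ _ => Or.inl (hcoh.append γ _ _ h)⟩

/-- A cycle can be traversed often enough to give closed words of any prescribed length bound. -/
lemma exists_long_cycle {r : Addr → Addr → Prop} (hr : IsTypeSystem r) {α γ : Addr}
    (hγ : γ ≠ []) (hc : r (α ++ γ) α) (n : ℕ) :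
    ∃ δ : Addr, n ≤ δ.length ∧ r (α ++ δ) α := by
  induction n with
  | zero => exact ⟨γ, Nat.zero_le _, hc⟩
  | succ n ih =>
    obtain ⟨δ, hδ, hcδ⟩ := ih
    refine ⟨δ ++ γ, ?_, ?_⟩
    · have := List.length_pos_iff.mpr hγ
      simp; omega
    · have := hr.1.trans (hr.2.1.append γ _ _ hcδ) hc
      simpa using this

/-- In a simple type system a child-closed set of types is at most one type or contains every
descendant of a cyclic type. -/
lemma merge_dichotomy {r : Addr → Addr → Prop} (hr : SimpleTS r) {S : Set Addr}
    (hne : S.Nonempty) (hsat : Saturated r S) (hcc : ChildClosed S) :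
    (∀ α ∈ S, ∀ β ∈ S, r α β) ∨ cyclicCore r ⊆ S := by
  obtain ⟨hts, -, hq⟩ := hr
  rcases hq _ (mergeRel_isQuotientOf hts hsat) with h | h
  · left
    intro α ha β hb
    exact (h α β).1 ⟨0, fun γ _ => Or.inr ⟨hcc.append γ _ ha, hcc.append γ _ hb⟩⟩
  · right
    rintro β ⟨α, δ, γ, hγ, hc, hd⟩
    obtain ⟨σ, hσ⟩ := hne
    obtain ⟨n, hn⟩ := h α σ
    obtain ⟨ε, hε, hcε⟩ := exists_long_cycle hts hγ hc n
    have hαε : α ++ ε ∈ S := by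
      rcases hn ε hε with h1 | h1
      · exact hsat _ (hcc.append ε _ hσ) _ (hts.1.symm h1)
      · exact h1.1
    exact hsat _ (hcc.append δ _ (hsat _ hαε _ hcε)) _ hd

lemma cyclicCore_mem {r : Addr → Addr → Prop} (hr : IsTypeSystem r)
    (hcyc : ∃ α γ : Addr, γ ≠ [] ∧ r (α ++ γ) α) :
    cyclicCore r ∈ StableChildClosedSets r := by
  have hcc : ChildClosed (cyclicCore r) := by
    rintro β ⟨α, δ, γ, hγ, hc, hd⟩
    have h := hr.2.1 _ _ hd
    exact ⟨⟨α, δ ++ [false], γ, hγ, hc, by simpa using h.1⟩,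
      ⟨α, δ ++ [true], γ, hγ, hc, by simpa using h.2⟩⟩
  have hmem : ∀ α γ : Addr, γ ≠ [] → r (α ++ γ) α → α ∈ cyclicCore r :=
    fun α γ hγ hc => ⟨α, γ, γ, hγ, hc, hc⟩
  refine ⟨?_, ?_, hcc, ?_⟩
  · obtain ⟨α, γ, hγ, hc⟩ := hcyc
    exact ⟨α, hmem α γ hγ hc⟩
  · rintro β ⟨α, δ, γ, hγ, hc, hd⟩ β' hb
    exact ⟨α, δ, γ, hγ, hc, hr.1.trans hd hb⟩
  · rintro β ⟨α, δ, γ, hγ, hc, hd⟩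
    have hα := hmem α γ hγ hc
    exact ⟨α, hα, ⟨γ, hγ, hcc.pathThrough hα γ, hc⟩, δ, hcc.pathThrough hα δ, hd⟩

lemma subset_cyclicCore {r : Addr → Addr → Prop} {S : Set Addr}
    (hS : S ∈ StableChildClosedSets r) : S ⊆ cyclicCore r := by
  intro β hb
  obtain ⟨α, -, ⟨γ, hγ, -, hc⟩, δ, -, hd⟩ := hS.2.2.2 β hb
  exact ⟨α, δ, γ, hγ, hc, hd⟩

lemma union_mem_stableChildClosedSets {r : Addr → Addr → Prop} {S T : Set Addr}
    (hS : S ∈ StableChildClosedSets r) (hT : T ∈ StableChildClosedSets r) :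
    S ∪ T ∈ StableChildClosedSets r := by
  obtain ⟨hSne, hSsat, hScc, hSst⟩ := hS
  obtain ⟨-, hTsat, hTcc, hTst⟩ := hT
  have hcc : ChildClosed (S ∪ T) := by
    rintro α (ha | ha)
    · exact (hScc α ha).imp Or.inl Or.inl
    · exact (hTcc α ha).imp Or.inr Or.inr
  refine ⟨hSne.mono Set.subset_union_left, ?_, hcc, ?_⟩
  · rintro α (ha | ha) β hab
    · exact Or.inl (hSsat α ha β hab)
    · exact Or.inr (hTsat α ha β hab)
  · rintro β (hb | hb)
    · obtain ⟨α, ha, ⟨γ, hγ, -, hc⟩, δ, -, hd⟩ := hSst β hb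
      have ha' : α ∈ S ∪ T := Or.inl ha
      exact ⟨α, ha', ⟨γ, hγ, hcc.pathThrough ha' γ, hc⟩, δ, hcc.pathThrough ha' δ, hd⟩
    · obtain ⟨α, ha, ⟨γ, hγ, -, hc⟩, δ, -, hd⟩ := hTst β hb
      have ha' : α ∈ S ∪ T := Or.inr ha
      exact ⟨α, ha', ⟨γ, hγ, hcc.pathThrough ha' γ, hc⟩, δ, hcc.pathThrough ha' δ, hd⟩

/-- A simple type system admitting a cycle contains exactly one, two
or three stable child-closed subsets; if exactly two, then one is a single type
contained in the other; if three, then two are single types and the third is their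
union. -/
theorem stable_childClosed_subsets_classification
    (r : Addr → Addr → Prop) (hr : SimpleTS r)
    (hcyc : ∃ α γ : Addr, γ ≠ [] ∧ r (α ++ γ) α) :
    ((StableChildClosedSets r).ncard = 1 ∨ (StableChildClosedSets r).ncard = 2 ∨
      (StableChildClosedSets r).ncard = 3) ∧
    ((StableChildClosedSets r).ncard = 2 →
      ∃ S₁ ∈ StableChildClosedSets r, ∃ S₂ ∈ StableChildClosedSets r,
        S₁ ≠ S₂ ∧ S₁ ⊆ S₂ ∧ IsSingleType r S₁) ∧
    ((StableChildClosedSets r).ncard = 3 →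
      ∃ S₁ ∈ StableChildClosedSets r, ∃ S₂ ∈ StableChildClosedSets r,
        ∃ S₃ ∈ StableChildClosedSets r,
        S₁ ≠ S₂ ∧ S₁ ≠ S₃ ∧ S₂ ≠ S₃ ∧
        IsSingleType r S₁ ∧ IsSingleType r S₂ ∧ S₃ = S₁ ∪ S₂) := by
  have hts := hr.1
  set C := cyclicCore r with hC
  have hCmem : C ∈ StableChildClosedSets r := cyclicCore_mem hts hcyc
  have hrel : ∀ S ∈ StableChildClosedSets r, S ≠ C → ∀ α ∈ S, ∀ β ∈ S, r α β := by
    intro S hS hSC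
    rcases merge_dichotomy hr hS.1 hS.2.1 hS.2.2.1 with h | h
    · exact h
    · exact absurd ((subset_cyclicCore hS).antisymm h) hSC
  have hsingle : ∀ S ∈ StableChildClosedSets r, S ≠ C → IsSingleType r S := by
    intro S hS hSC
    obtain ⟨a, ha⟩ := hS.1
    exact ⟨a, Set.Subset.antisymm (fun β hb => hrel S hS hSC a ha β hb)
      (fun β hb => hS.2.1 a ha β hb)⟩
  -- Two single types with a common member coincide.
  have hmeet : ∀ S ∈ StableChildClosedSets r, S ≠ C → ∀ T ∈ StableChildClosedSets r, T ≠ C →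
      ∀ a, a ∈ S → a ∈ T → S = T := by
    intro S hS hSC T hT hTC a haS haT
    exact Set.Subset.antisymm
      (fun β hb => hT.2.1 a haT β (hrel S hS hSC a haS β hb))
      (fun β hb => hS.2.1 a haS β (hrel T hT hTC a haT β hb))
  by_cases h1 : ∃ S ∈ StableChildClosedSets r, S ≠ C
  swap
  · have hE : StableChildClosedSets r = {C} := by
      push Not at h1
      exact Set.eq_singleton_iff_unique_mem.2 ⟨hCmem, h1⟩
    have hn : (StableChildClosedSets r).ncard = 1 := by rw [hE, Set.ncard_singleton]
    exact ⟨Or.inl hn, fun h => by omega, fun h => by omega⟩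
  obtain ⟨S, hS, hSC⟩ := h1
  by_cases h2 : ∃ T ∈ StableChildClosedSets r, T ≠ C ∧ T ≠ S
  swap
  · have hE : StableChildClosedSets r = {S, C} := by
      push Not at h2
      ext U
      constructor
      · intro hU
        by_cases hUC : U = C
        · exact Or.inr hUC
        · exact Or.inl (h2 U hU hUC)
      · rintro (rfl | hU)
        · exact hS
        · exact hU ▸ hCmem
    have hn : (StableChildClosedSets r).ncard = 2 := by rw [hE, Set.ncard_pair hSC]
    exact ⟨Or.inr (Or.inl hn),
      fun _ => ⟨S, hS, C, hCmem, hSC, subset_cyclicCore hS, hsingle S hS hSC⟩,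
      fun h => by omega⟩
  obtain ⟨T, hT, hTC, hTS⟩ := h2
  have hST : C = S ∪ T := by
    by_contra hne
    have hall := hrel _ (union_mem_stableChildClosedSets hS hT) (Ne.symm hne)
    obtain ⟨a, ha⟩ := hS.1
    obtain ⟨b, hb⟩ := hT.1
    have hbS : b ∈ S := hS.2.1 a ha b (hall a (Or.inl ha) b (Or.inr hb))
    exact hTS (hmeet T hT hTC S hS hSC b hb hbS)
  have hE : StableChildClosedSets r = {S, T, C} := by
    ext U
    constructor
    · intro hU
      by_cases hUC : U = C
      · exact Or.inr (Or.inr hUC)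
      · obtain ⟨a, ha⟩ := hU.1
        have haC : a ∈ S ∪ T := hST ▸ subset_cyclicCore hU ha
        rcases haC with haS | haT
        · exact Or.inl (hmeet U hU hUC S hS hSC a ha haS)
        · exact Or.inr (Or.inl (hmeet U hU hUC T hT hTC a ha haT))
    · rintro (rfl | rfl | hU)
      · exact hS
      · exact hT
      · exact hU ▸ hCmem
  have hn : (StableChildClosedSets r).ncard = 3 :=
    Set.ncard_eq_three.2 ⟨S, T, C, Ne.symm hTS, hSC, hTC, hE⟩
  exact ⟨Or.inr (Or.inr hn), fun h => by omega,
    fun _ => ⟨S, hS, T, hT, C, hCmem, Ne.symm hTS, hSC, hTC,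
      hsingle S hS hSC, hsingle T hT hTC, hST⟩⟩
end
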